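/- arXiv:2312.06061 — 2 statements merged into one kernel-verified Lean document; each statement's English description precedes it below -/
import Mathlib

section
/- Every commutative semi-universally flexible loop with the inverse property is a Moufang loop: if Q is an SUF IP loop with x·y = y·x for all x, y, then Q satisfies ((x·y)·z)·y = x·(y·(z·y)) for all x, y, z. -/
/-- A loop `(Q, ·, \, /, 1)`: `mul x y = x·y`, `ld x y = x\y`, `rd x y = x/y`. -/
structure LoopStr (Q : Type*) where
  mul : Q → Q → Q
  ld : Q → Q → Q
  rd : Q → Q → Q
  one : Q
  ld_mul : ∀ x y, ld x (mul x y) = y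
  rd_mul : ∀ x y, rd (mul y x) x = y
  mul_ld : ∀ x y, mul x (ld x y) = y
  mul_rd : ∀ x y, mul (rd y x) x = y
  one_mul : ∀ x, mul one x = x
  mul_one : ∀ x, mul x one = x

/-- Left cancellation. -/
theorem lp_cancel {Q : Type*} (L : LoopStr Q) {a b c : Q} (h : L.mul a b = L.mul a c) : b = c := by
  rw [← L.ld_mul a b, h, L.ld_mul]

theorem lp_inv_inv {Q : Type*} (L : LoopStr Q) (inv : Q → Q)
    (lip : ∀ x y, L.mul (inv x) (L.mul x y) = y) (a : Q) : inv (inv a) = a := by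
  have h1 := lip a L.one
  have h2 := lip (inv a) (L.mul a L.one)
  rw [h1, L.mul_one, L.mul_one] at h2
  exact h2

theorem lp_rd {Q : Type*} (L : LoopStr Q) (inv : Q → Q)
    (rip : ∀ x y, L.mul (L.mul y x) (inv x) = y) (a u : Q) : L.rd a u = L.mul a (inv u) := by
  conv_rhs => rw [← L.mul_rd u a]
  rw [rip]

/-- The key identity: `L_{ax}` commutes with `L_x L_a`. -/
theorem lp_hex {Q : Type*} (L : LoopStr Q) (inv : Q → Q)
    (lip : ∀ x y, L.mul (inv x) (L.mul x y) = y)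
    (rip : ∀ x y, L.mul (L.mul y x) (inv x) = y)
    (lsuf : ∀ x y u,
      L.mul (L.rd x u) (L.mul (L.rd y u) x)
        = L.mul (L.rd (L.mul (L.rd x u) y) u) x)
    (comm : ∀ x y, L.mul x y = L.mul y x) (a x y : Q) :
    L.mul (L.mul a x) (L.mul x (L.mul a y)) = L.mul x (L.mul a (L.mul (L.mul a x) y)) := by
  have h := lsuf x y (inv a)
  simp only [lp_rd L inv rip, lp_inv_inv L inv lip] at h
  rw [comm a x, comm a y, comm x (L.mul y a), h, comm x (L.mul a _), comm a (L.mul _ y)]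

theorem st_comm {Q : Type*} (L : LoopStr Q)
    (comm : ∀ x y, L.mul x y = L.mul y x)
    {a b c : Q} (h : L.mul a b = c) :
    L.mul b a = c := by
  rw [comm, h]

theorem st_ip {Q : Type*} (L : LoopStr Q) (inv : Q → Q)
    (lip : ∀ x y, L.mul (inv x) (L.mul x y) = y)
    {a b c d : Q} (h : L.mul a b = c) (k : inv a = d) :
    L.mul d c = b := by
  rw [← h, ← k, lip]

theorem st_iinv {Q : Type*} (L : LoopStr Q) (inv : Q → Q)
    (lip : ∀ x y, L.mul (inv x) (L.mul x y) = y)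
    {a b : Q} (h : inv a = b) :
    inv b = a := by
  rw [← h, lp_inv_inv L inv lip]

theorem st_aip {Q : Type*} (L : LoopStr Q) (inv : Q → Q)
    (lip : ∀ x y, L.mul (inv x) (L.mul x y) = y)
    (rip : ∀ x y, L.mul (L.mul y x) (inv x) = y)
    (comm : ∀ x y, L.mul x y = L.mul y x)
    {a b c a2 b2 d : Q} (h : L.mul a b = c) (k : inv a = a2) (k2 : inv b = b2)
    (h2 : L.mul a2 b2 = d) :
    inv c = d := by
  subst h k k2 h2
  have h1 : L.mul (inv (L.mul a b)) a = inv b := by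
    have := lip (L.mul a b) (inv b)
    rwa [rip] at this
  have h3 := rip a (inv (L.mul a b))
  rw [h1, comm] at h3
  exact h3.symm

theorem st_hex_q {Q : Type*} (L : LoopStr Q)
    (hx : ∀ a x y, L.mul (L.mul a x) (L.mul x (L.mul a y))
      = L.mul x (L.mul a (L.mul (L.mul a x) y)))
    {a x y z q r t p u : Q} (hz : L.mul a x = z) (hy1 : L.mul a y = q) (hr : L.mul z r = t)
    (hy : L.mul z y = p) (hp : L.mul a p = u) (hu : L.mul x u = t) :
    L.mul x q = r := by
  have h := hx a x y
  rw [hz, hy1, hy, hp, hu, ← hr] at h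
  exact lp_cancel L h

theorem st_hex_r {Q : Type*} (L : LoopStr Q)
    (hx : ∀ a x y, L.mul (L.mul a x) (L.mul x (L.mul a y))
      = L.mul x (L.mul a (L.mul (L.mul a x) y)))
    {a x y z q r t p u : Q} (hz : L.mul a x = z) (hy1 : L.mul a y = q) (hq : L.mul x q = r)
    (hy : L.mul z y = p) (hp : L.mul a p = u) (hu : L.mul x u = t) :
    L.mul z r = t := by
  have h := hx a x y
  subst hz hy1 hq hy hp hu
  exact h

theorem st_hex_p {Q : Type*} (L : LoopStr Q)
    (hx : ∀ a x y, L.mul (L.mul a x) (L.mul x (L.mul a y))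
      = L.mul x (L.mul a (L.mul (L.mul a x) y)))
    {a x y z q r t p u : Q} (hz : L.mul a x = z) (hy1 : L.mul a y = q) (hq : L.mul x q = r) (hr : L.mul z r = t)
    (hy : L.mul z y = p) (hu : L.mul x u = t) :
    L.mul a p = u := by
  have h := hx a x y
  rw [hz, hy1, hq, hr, hy, ← hu] at h
  exact (lp_cancel L h).symm

theorem st_hex_u {Q : Type*} (L : LoopStr Q)
    (hx : ∀ a x y, L.mul (L.mul a x) (L.mul x (L.mul a y))
      = L.mul x (L.mul a (L.mul (L.mul a x) y)))
    {a x y z q r t p u : Q} (hz : L.mul a x = z) (hy1 : L.mul a y = q) (hq : L.mul x q = r) (hr : L.mul z r = t)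
    (hy : L.mul z y = p) (hp : L.mul a p = u) :
    L.mul x u = t := by
  have h := hx a x y
  subst hz hy1 hq hy hp hr
  exact h.symm

theorem st_hex_y {Q : Type*} (L : LoopStr Q)
    (hx : ∀ a x y, L.mul (L.mul a x) (L.mul x (L.mul a y))
      = L.mul x (L.mul a (L.mul (L.mul a x) y)))
    {a x y z q r t p u : Q} (hz : L.mul a x = z) (hy1 : L.mul a y = q) (hq : L.mul x q = r) (hr : L.mul z r = t) (hp : L.mul a p = u) (hu : L.mul x u = t) :
    L.mul z y = p := by
  have h := hx a x y
  rw [hz, hy1, hq, hr, ← hu, ← hp] at h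
  exact (lp_cancel L (lp_cancel L h)).symm

/-- Every commutative SUF IP loop is Moufang. -/
theorem comm_suf_ip_moufang {Q : Type*} (L : LoopStr Q) (inv : Q → Q)
    (lip : ∀ x y, L.mul (inv x) (L.mul x y) = y)
    (rip : ∀ x y, L.mul (L.mul y x) (inv x) = y)
    (lsuf : ∀ x y u,
      L.mul (L.rd x u) (L.mul (L.rd y u) x)
        = L.mul (L.rd (L.mul (L.rd x u) y) u) x)
    (rsuf : ∀ x y v,
      L.mul x (L.ld v (L.mul y (L.ld v x)))
        = L.mul (L.mul x (L.ld v y)) (L.ld v x))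
    (comm : ∀ x y, L.mul x y = L.mul y x) :
    ∀ x y z, L.mul (L.mul (L.mul x y) z) y = L.mul x (L.mul y (L.mul z y)) := by
  intro x y z
  have hx := lp_hex L inv lip rip lsuf comm
  obtain ⟨n2, s5⟩ : ∃ n, inv x = n := ⟨_, rfl⟩
  have s6 : inv n2 = x := st_iinv L inv lip s5
  obtain ⟨n4, s24⟩ : ∃ n, inv y = n := ⟨_, rfl⟩
  have s25 : inv n4 = y := st_iinv L inv lip s24
  obtain ⟨n6, s43⟩ : ∃ n, inv z = n := ⟨_, rfl⟩
  have s44 : inv n6 = z := st_iinv L inv lip s43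
  obtain ⟨n7, s62⟩ : ∃ n, L.mul x y = n := ⟨_, rfl⟩
  obtain ⟨n8, s73⟩ : ∃ n, L.mul n2 n4 = n := ⟨_, rfl⟩
  have s74 : inv n7 = n8 := st_aip L inv lip rip comm s62 s5 s24 s73
  have s75 : L.mul n4 n2 = n8 := st_comm L comm s73
  have s76 : L.mul x n8 = n4 := st_ip L inv lip s73 s6
  have s77 : inv n8 = n7 := st_iinv L inv lip s74
  have s83 : L.mul y n8 = n2 := st_ip L inv lip s75 s25
  obtain ⟨n9, s107⟩ : ∃ n, L.mul n7 z = n := ⟨_, rfl⟩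
  have s108 : L.mul z n7 = n9 := st_comm L comm s107
  have s111 : L.mul n6 n9 = n7 := st_ip L inv lip s108 s43
  have s114 : L.mul n9 n6 = n7 := st_comm L comm s111
  obtain ⟨n10, s118⟩ : ∃ n, L.mul n8 n6 = n := ⟨_, rfl⟩
  have s119 : inv n9 = n10 := st_aip L inv lip rip comm s107 s74 s43 s118
  have s120 : L.mul n6 n8 = n10 := st_comm L comm s118
  have s121 : L.mul n7 n10 = n6 := st_ip L inv lip s118 s77
  have s122 : inv n10 = n9 := st_iinv L inv lip s119
  have s126 : L.mul n10 n7 = n6 := st_ip L inv lip s114 s119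
  obtain ⟨n11, s152⟩ : ∃ n, L.mul n9 y = n := ⟨_, rfl⟩
  obtain ⟨n12, s163⟩ : ∃ n, L.mul n10 n4 = n := ⟨_, rfl⟩
  have s164 : inv n11 = n12 := st_aip L inv lip rip comm s152 s119 s24 s163
  have s165 : L.mul n4 n10 = n12 := st_comm L comm s163
  have s167 : inv n12 = n11 := st_iinv L inv lip s164
  have s173 : L.mul y n12 = n10 := st_ip L inv lip s165 s25
  obtain ⟨n13, s197⟩ : ∃ n, L.mul z y = n := ⟨_, rfl⟩
  have s198 : L.mul y z = n13 := st_comm L comm s197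
  have s199 : L.mul n6 n13 = y := st_ip L inv lip s197 s43
  have s201 : L.mul n4 n13 = z := st_ip L inv lip s198 s24
  have s202 : L.mul n13 n6 = y := st_comm L comm s199
  have s204 : L.mul n13 n4 = z := st_comm L comm s201
  obtain ⟨n14, s208⟩ : ∃ n, L.mul n6 n4 = n := ⟨_, rfl⟩
  have s209 : inv n13 = n14 := st_aip L inv lip rip comm s197 s43 s24 s208
  have s210 : L.mul n4 n6 = n14 := st_comm L comm s208
  have s211 : L.mul z n14 = n4 := st_ip L inv lip s208 s44
  have s212 : inv n14 = n13 := st_iinv L inv lip s209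
  have s215 : L.mul n14 y = n6 := st_ip L inv lip s202 s209
  have s216 : L.mul n14 z = n4 := st_ip L inv lip s204 s209
  have s218 : L.mul y n14 = n6 := st_ip L inv lip s210 s25
  obtain ⟨n15, s242⟩ : ∃ n, L.mul y n13 = n := ⟨_, rfl⟩
  have s243 : L.mul n13 y = n15 := st_comm L comm s242
  have s246 : L.mul n14 n15 = y := st_ip L inv lip s243 s209
  obtain ⟨n16, s253⟩ : ∃ n, L.mul n4 n14 = n := ⟨_, rfl⟩
  have s254 : inv n15 = n16 := st_aip L inv lip rip comm s242 s24 s209 s253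
  have s255 : L.mul n14 n4 = n16 := st_comm L comm s253
  have s257 : inv n16 = n15 := st_iinv L inv lip s254
  have s263 : L.mul n13 n16 = n4 := st_ip L inv lip s255 s212
  obtain ⟨n17, s287⟩ : ∃ n, L.mul x n15 = n := ⟨_, rfl⟩
  obtain ⟨n18, s298⟩ : ∃ n, L.mul n2 n16 = n := ⟨_, rfl⟩
  have s299 : inv n17 = n18 := st_aip L inv lip rip comm s287 s5 s254 s298
  have s301 : L.mul x n18 = n16 := st_ip L inv lip s298 s6
  have s302 : inv n18 = n17 := st_iinv L inv lip s299
  obtain ⟨n21, s363⟩ : ∃ n, L.mul x n4 = n := ⟨_, rfl⟩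
  have s364 : L.mul n4 x = n21 := st_comm L comm s363
  have s367 : L.mul y n21 = x := st_ip L inv lip s364 s25
  obtain ⟨n22, s374⟩ : ∃ n, L.mul n2 y = n := ⟨_, rfl⟩
  have s375 : inv n21 = n22 := st_aip L inv lip rip comm s363 s5 s25 s374
  have s377 : L.mul x n22 = y := st_ip L inv lip s374 s6
  have s378 : inv n22 = n21 := st_iinv L inv lip s375
  obtain ⟨n23, s408⟩ : ∃ n, L.mul x z = n := ⟨_, rfl⟩
  obtain ⟨n24, s419⟩ : ∃ n, L.mul n2 n6 = n := ⟨_, rfl⟩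
  have s420 : inv n23 = n24 := st_aip L inv lip rip comm s408 s5 s43 s419
  have s421 : L.mul n6 n2 = n24 := st_comm L comm s419
  have s422 : L.mul x n24 = n6 := st_ip L inv lip s419 s6
  have s423 : inv n24 = n23 := st_iinv L inv lip s420
  have s429 : L.mul z n24 = n2 := st_ip L inv lip s421 s44
  obtain ⟨n25, s453⟩ : ∃ n, L.mul x n6 = n := ⟨_, rfl⟩
  have s454 : L.mul n6 x = n25 := st_comm L comm s453
  have s457 : L.mul z n25 = x := st_ip L inv lip s454 s44
  obtain ⟨n26, s464⟩ : ∃ n, L.mul n2 z = n := ⟨_, rfl⟩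
  have s465 : inv n25 = n26 := st_aip L inv lip rip comm s453 s5 s44 s464
  have s467 : L.mul x n26 = z := st_ip L inv lip s464 s6
  obtain ⟨n29, s529⟩ : ∃ n, L.mul y n6 = n := ⟨_, rfl⟩
  have s530 : L.mul n6 y = n29 := st_comm L comm s529
  have s533 : L.mul z n29 = y := st_ip L inv lip s530 s44
  obtain ⟨n30, s540⟩ : ∃ n, L.mul n4 z = n := ⟨_, rfl⟩
  have s541 : inv n29 = n30 := st_aip L inv lip rip comm s529 s24 s44 s540
  have s542 : L.mul z n4 = n30 := st_comm L comm s540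
  have s544 : inv n30 = n29 := st_iinv L inv lip s541
  have s550 : L.mul n6 n30 = n4 := st_ip L inv lip s542 s43
  obtain ⟨n35, s825⟩ : ∃ n, L.mul x n13 = n := ⟨_, rfl⟩
  obtain ⟨n36, s836⟩ : ∃ n, L.mul n2 n14 = n := ⟨_, rfl⟩
  have s837 : inv n35 = n36 := st_aip L inv lip rip comm s825 s5 s209 s836
  have s838 : L.mul n14 n2 = n36 := st_comm L comm s836
  have s839 : L.mul x n36 = n14 := st_ip L inv lip s836 s6
  have s840 : inv n36 = n35 := st_iinv L inv lip s837
  obtain ⟨n37, s870⟩ : ∃ n, L.mul x n14 = n := ⟨_, rfl⟩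
  have s871 : L.mul n14 x = n37 := st_comm L comm s870
  have s872 : L.mul n2 n37 = n14 := st_ip L inv lip s870 s5
  obtain ⟨n38, s881⟩ : ∃ n, L.mul n2 n13 = n := ⟨_, rfl⟩
  have s882 : inv n37 = n38 := st_aip L inv lip rip comm s870 s5 s212 s881
  have s884 : L.mul x n38 = n13 := st_ip L inv lip s881 s6
  have s885 : inv n38 = n37 := st_iinv L inv lip s882
  obtain ⟨n53, s1230⟩ : ∃ n, L.mul x n30 = n := ⟨_, rfl⟩
  obtain ⟨n54, s1241⟩ : ∃ n, L.mul n2 n29 = n := ⟨_, rfl⟩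
  have s1242 : inv n53 = n54 := st_aip L inv lip rip comm s1230 s5 s544 s1241
  have s1244 : L.mul x n54 = n29 := st_ip L inv lip s1241 s6
  have s1245 : inv n54 = n53 := st_iinv L inv lip s1242
  obtain ⟨n67, s1545⟩ : ∃ n, L.mul y n23 = n := ⟨_, rfl⟩
  have s1546 : L.mul n23 y = n67 := st_comm L comm s1545
  obtain ⟨n68, s1556⟩ : ∃ n, L.mul n4 n24 = n := ⟨_, rfl⟩
  have s1557 : inv n67 = n68 := st_aip L inv lip rip comm s1545 s24 s420 s1556
  have s1558 : L.mul n24 n4 = n68 := st_comm L comm s1556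
  have s1560 : inv n68 = n67 := st_iinv L inv lip s1557
  obtain ⟨n69, s1590⟩ : ∃ n, L.mul y n24 = n := ⟨_, rfl⟩
  have s1592 : L.mul n4 n69 = n24 := st_ip L inv lip s1590 s24
  obtain ⟨n70, s1601⟩ : ∃ n, L.mul n4 n23 = n := ⟨_, rfl⟩
  have s1602 : inv n69 = n70 := st_aip L inv lip rip comm s1590 s24 s423 s1601
  have s1603 : L.mul n23 n4 = n70 := st_comm L comm s1601
  obtain ⟨n71, s1635⟩ : ∃ n, L.mul y n25 = n := ⟨_, rfl⟩
  have s1637 : L.mul n4 n71 = n25 := st_ip L inv lip s1635 s24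
  obtain ⟨n72, s1646⟩ : ∃ n, L.mul n4 n26 = n := ⟨_, rfl⟩
  have s1647 : inv n71 = n72 := st_aip L inv lip rip comm s1635 s24 s465 s1646
  obtain ⟨n83, s1905⟩ : ∃ n, L.mul z n8 = n := ⟨_, rfl⟩
  obtain ⟨n84, s1916⟩ : ∃ n, L.mul n6 n7 = n := ⟨_, rfl⟩
  have s1917 : inv n83 = n84 := st_aip L inv lip rip comm s1905 s43 s77 s1916
  have s1918 : L.mul n7 n6 = n84 := st_comm L comm s1916
  obtain ⟨n91, s2085⟩ : ∃ n, L.mul z n21 = n := ⟨_, rfl⟩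
  have s2086 : L.mul n21 z = n91 := st_comm L comm s2085
  obtain ⟨n92, s2096⟩ : ∃ n, L.mul n6 n22 = n := ⟨_, rfl⟩
  have s2097 : inv n91 = n92 := st_aip L inv lip rip comm s2085 s43 s375 s2096
  obtain ⟨n93, s2130⟩ : ∃ n, L.mul z n22 = n := ⟨_, rfl⟩
  obtain ⟨n94, s2141⟩ : ∃ n, L.mul n6 n21 = n := ⟨_, rfl⟩
  have s2142 : inv n93 = n94 := st_aip L inv lip rip comm s2130 s43 s378 s2141
  have s2145 : inv n94 = n93 := st_iinv L inv lip s2142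
  obtain ⟨n107, s3690⟩ : ∃ n, L.mul x n10 = n := ⟨_, rfl⟩
  have s3692 : L.mul n2 n107 = n10 := st_ip L inv lip s3690 s5
  obtain ⟨n108, s3701⟩ : ∃ n, L.mul n2 n9 = n := ⟨_, rfl⟩
  have s3702 : inv n107 = n108 := st_aip L inv lip rip comm s3690 s5 s122 s3701
  have s3704 : L.mul x n108 = n9 := st_ip L inv lip s3701 s6
  have s3705 : inv n108 = n107 := st_iinv L inv lip s3702
  obtain ⟨n109, s3735⟩ : ∃ n, L.mul x n16 = n := ⟨_, rfl⟩
  obtain ⟨n110, s3746⟩ : ∃ n, L.mul n2 n15 = n := ⟨_, rfl⟩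
  have s3747 : inv n109 = n110 := st_aip L inv lip rip comm s3735 s5 s257 s3746
  have s3749 : L.mul x n110 = n15 := st_ip L inv lip s3746 s6
  have s3750 : inv n110 = n109 := st_iinv L inv lip s3747
  obtain ⟨n139, s4410⟩ : ∃ n, L.mul x n68 = n := ⟨_, rfl⟩
  have s4412 : L.mul n2 n139 = n68 := st_ip L inv lip s4410 s5
  obtain ⟨n140, s4421⟩ : ∃ n, L.mul n2 n67 = n := ⟨_, rfl⟩
  have s4422 : inv n139 = n140 := st_aip L inv lip rip comm s4410 s5 s1560 s4421
  have s4424 : L.mul x n140 = n67 := st_ip L inv lip s4421 s6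
  obtain ⟨n185, s5445⟩ : ∃ n, L.mul y n10 = n := ⟨_, rfl⟩
  have s5447 : L.mul n4 n185 = n10 := st_ip L inv lip s5445 s24
  have s5450 : L.mul n185 n4 = n10 := st_comm L comm s5447
  obtain ⟨n186, s5456⟩ : ∃ n, L.mul n4 n9 = n := ⟨_, rfl⟩
  have s5457 : inv n185 = n186 := st_aip L inv lip rip comm s5445 s24 s122 s5456
  have s5458 : L.mul n9 n4 = n186 := st_comm L comm s5456
  obtain ⟨n191, s5580⟩ : ∃ n, L.mul y n35 = n := ⟨_, rfl⟩
  have s5581 : L.mul n35 y = n191 := st_comm L comm s5580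
  obtain ⟨n192, s5591⟩ : ∃ n, L.mul n4 n36 = n := ⟨_, rfl⟩
  have s5592 : inv n191 = n192 := st_aip L inv lip rip comm s5580 s24 s837 s5591
  have s5595 : inv n192 = n191 := st_iinv L inv lip s5592
  obtain ⟨n193, s5625⟩ : ∃ n, L.mul y n36 = n := ⟨_, rfl⟩
  have s5627 : L.mul n4 n193 = n36 := st_ip L inv lip s5625 s24
  obtain ⟨n194, s5636⟩ : ∃ n, L.mul n4 n35 = n := ⟨_, rfl⟩
  have s5637 : inv n193 = n194 := st_aip L inv lip rip comm s5625 s24 s840 s5636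
  have s5638 : L.mul n35 n4 = n194 := st_comm L comm s5636
  obtain ⟨n195, s5670⟩ : ∃ n, L.mul y n37 = n := ⟨_, rfl⟩
  have s5671 : L.mul n37 y = n195 := st_comm L comm s5670
  have s5672 : L.mul n4 n195 = n37 := st_ip L inv lip s5670 s24
  obtain ⟨n196, s5681⟩ : ∃ n, L.mul n4 n38 = n := ⟨_, rfl⟩
  have s5682 : inv n195 = n196 := st_aip L inv lip rip comm s5670 s24 s882 s5681
  have s5683 : L.mul n38 n4 = n196 := st_comm L comm s5681
  obtain ⟨n197, s5715⟩ : ∃ n, L.mul y n38 = n := ⟨_, rfl⟩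
  obtain ⟨n198, s5726⟩ : ∃ n, L.mul n4 n37 = n := ⟨_, rfl⟩
  have s5727 : inv n197 = n198 := st_aip L inv lip rip comm s5715 s24 s885 s5726
  have s5728 : L.mul n37 n4 = n198 := st_comm L comm s5726
  have s5736 : L.mul n38 n198 = n4 := st_ip L inv lip s5728 s882
  obtain ⟨n249, s6885⟩ : ∃ n, L.mul y n83 = n := ⟨_, rfl⟩
  obtain ⟨n250, s6896⟩ : ∃ n, L.mul n4 n84 = n := ⟨_, rfl⟩
  have s6897 : inv n249 = n250 := st_aip L inv lip rip comm s6885 s24 s1917 s6896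
  have s6899 : L.mul y n250 = n84 := st_ip L inv lip s6896 s25
  obtain ⟨n253, s6975⟩ : ∃ n, L.mul y n91 = n := ⟨_, rfl⟩
  have s6977 : L.mul n4 n253 = n91 := st_ip L inv lip s6975 s24
  obtain ⟨n254, s6986⟩ : ∃ n, L.mul n4 n92 = n := ⟨_, rfl⟩
  have s6987 : inv n253 = n254 := st_aip L inv lip rip comm s6975 s24 s2097 s6986
  have s6990 : inv n254 = n253 := st_iinv L inv lip s6987
  obtain ⟨n259, s7110⟩ : ∃ n, L.mul y n94 = n := ⟨_, rfl⟩
  obtain ⟨n260, s7121⟩ : ∃ n, L.mul n4 n93 = n := ⟨_, rfl⟩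
  have s7122 : inv n259 = n260 := st_aip L inv lip rip comm s7110 s24 s2145 s7121
  have s7125 : inv n260 = n259 := st_iinv L inv lip s7122
  obtain ⟨n273, s7425⟩ : ∃ n, L.mul z n35 = n := ⟨_, rfl⟩
  have s7426 : L.mul n35 z = n273 := st_comm L comm s7425
  obtain ⟨n274, s7436⟩ : ∃ n, L.mul n6 n36 = n := ⟨_, rfl⟩
  have s7437 : inv n273 = n274 := st_aip L inv lip rip comm s7425 s43 s837 s7436
  have s7440 : inv n274 = n273 := st_iinv L inv lip s7437
  obtain ⟨n275, s7470⟩ : ∃ n, L.mul z n36 = n := ⟨_, rfl⟩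
  have s7471 : L.mul n36 z = n275 := st_comm L comm s7470
  have s7474 : L.mul n35 n275 = z := st_ip L inv lip s7471 s840
  obtain ⟨n277, s7515⟩ : ∃ n, L.mul z n37 = n := ⟨_, rfl⟩
  have s7516 : L.mul n37 z = n277 := st_comm L comm s7515
  have s7519 : L.mul n38 n277 = z := st_ip L inv lip s7516 s882
  obtain ⟨n278, s7526⟩ : ∃ n, L.mul n6 n38 = n := ⟨_, rfl⟩
  have s7527 : inv n277 = n278 := st_aip L inv lip rip comm s7515 s43 s882 s7526
  have s7530 : inv n278 = n277 := st_iinv L inv lip s7527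
  obtain ⟨n279, s7560⟩ : ∃ n, L.mul z n38 = n := ⟨_, rfl⟩
  have s7561 : L.mul n38 z = n279 := st_comm L comm s7560
  obtain ⟨n280, s7571⟩ : ∃ n, L.mul n6 n37 = n := ⟨_, rfl⟩
  have s7572 : inv n279 = n280 := st_aip L inv lip rip comm s7560 s43 s885 s7571
  have s7573 : L.mul n37 n6 = n280 := st_comm L comm s7571
  have s7575 : inv n280 = n279 := st_iinv L inv lip s7572
  obtain ⟨n313, s8325⟩ : ∃ n, L.mul z n67 = n := ⟨_, rfl⟩
  obtain ⟨n314, s8336⟩ : ∃ n, L.mul n6 n68 = n := ⟨_, rfl⟩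
  have s8337 : inv n313 = n314 := st_aip L inv lip rip comm s8325 s43 s1557 s8336
  have s8340 : inv n314 = n313 := st_iinv L inv lip s8337
  obtain ⟨n315, s8370⟩ : ∃ n, L.mul z n68 = n := ⟨_, rfl⟩
  obtain ⟨n316, s8381⟩ : ∃ n, L.mul n6 n67 = n := ⟨_, rfl⟩
  have s8382 : inv n315 = n316 := st_aip L inv lip rip comm s8370 s43 s1560 s8381
  have s8384 : L.mul z n316 = n67 := st_ip L inv lip s8381 s44
  obtain ⟨n317, s8415⟩ : ∃ n, L.mul z n69 = n := ⟨_, rfl⟩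
  obtain ⟨n318, s8426⟩ : ∃ n, L.mul n6 n70 = n := ⟨_, rfl⟩
  have s8427 : inv n317 = n318 := st_aip L inv lip rip comm s8415 s43 s1602 s8426
  have s8429 : L.mul z n318 = n70 := st_ip L inv lip s8426 s44
  obtain ⟨n321, s8505⟩ : ∃ n, L.mul z n71 = n := ⟨_, rfl⟩
  obtain ⟨n322, s8516⟩ : ∃ n, L.mul n6 n72 = n := ⟨_, rfl⟩
  have s8517 : inv n321 = n322 := st_aip L inv lip rip comm s8505 s43 s1647 s8516
  have s8520 : inv n322 = n321 := st_iinv L inv lip s8517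
  obtain ⟨n349, s9121⟩ : ∃ n, L.mul n7 n13 = n := ⟨_, rfl⟩
  obtain ⟨n350, s9132⟩ : ∃ n, L.mul n8 n14 = n := ⟨_, rfl⟩
  have s9133 : inv n349 = n350 := st_aip L inv lip rip comm s9121 s74 s209 s9132
  have s9134 : L.mul n14 n8 = n350 := st_comm L comm s9132
  have s9135 : L.mul n7 n350 = n14 := st_ip L inv lip s9132 s77
  have s9136 : inv n350 = n349 := st_iinv L inv lip s9133
  have s9142 : L.mul n13 n350 = n8 := st_ip L inv lip s9134 s212
  obtain ⟨n387, s9962⟩ : ∃ n, L.mul n13 n25 = n := ⟨_, rfl⟩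
  obtain ⟨n388, s9973⟩ : ∃ n, L.mul n14 n26 = n := ⟨_, rfl⟩
  have s9974 : inv n387 = n388 := st_aip L inv lip rip comm s9962 s209 s465 s9973
  have s9976 : L.mul n13 n388 = n26 := st_ip L inv lip s9973 s212
  have s9977 : inv n388 = n387 := st_iinv L inv lip s9974
  obtain ⟨n419, s10654⟩ : ∃ n, L.mul n21 n24 = n := ⟨_, rfl⟩
  have s10655 : L.mul n24 n21 = n419 := st_comm L comm s10654
  obtain ⟨n420, s10665⟩ : ∃ n, L.mul n22 n23 = n := ⟨_, rfl⟩
  have s10666 : inv n419 = n420 := st_aip L inv lip rip comm s10654 s375 s423 s10665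
  have s10669 : inv n420 = n419 := st_iinv L inv lip s10666
  have s13350 : L.mul n24 n107 = n314 := st_hex_u L hx s422 s76 s1558 s8336 s120 s3690
  have s13351 : L.mul n107 n24 = n314 := st_comm L comm s13350
  have s13354 : L.mul n108 n314 = n24 := st_ip L inv lip s13351 s3702
  have s13357 : L.mul n314 n108 = n24 := st_comm L comm s13354
  have s13362 : L.mul n313 n24 = n108 := st_ip L inv lip s13357 s8340
  have s13365 : L.mul n24 n313 = n108 := st_comm L comm s13362
  have s13370 : L.mul n23 n108 = n313 := st_ip L inv lip s13365 s423
  have s14545 : L.mul n8 n195 = n107 := st_hex_q L hx s83 s5670 s3692 s872 s218 s118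
  have s14547 : L.mul n7 n107 = n195 := st_ip L inv lip s14545 s77
  have s14921 : L.mul n14 n185 = n274 := st_hex_u L hx s218 s83 s838 s7436 s120 s5445
  have s14922 : L.mul n185 n14 = n274 := st_comm L comm s14921
  have s14923 : L.mul n13 n274 = n185 := st_ip L inv lip s14921 s212
  have s14925 : L.mul n186 n274 = n14 := st_ip L inv lip s14922 s5457
  have s14926 : L.mul n274 n13 = n185 := st_comm L comm s14923
  have s14928 : L.mul n274 n186 = n14 := st_comm L comm s14925
  have s14931 : L.mul n273 n185 = n13 := st_ip L inv lip s14926 s7440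
  have s14933 : L.mul n273 n14 = n186 := st_ip L inv lip s14928 s7440
  have s14934 : L.mul n185 n273 = n13 := st_comm L comm s14931
  have s14936 : L.mul n14 n273 = n186 := st_comm L comm s14933
  have s14939 : L.mul n186 n13 = n273 := st_ip L inv lip s14934 s5457
  have s14941 : L.mul n13 n186 = n273 := st_ip L inv lip s14936 s212
  have s14946 : L.mul n14 n259 = n280 := st_hex_u L hx s218 s367 s871 s7571 s2141 s7110
  have s14947 : L.mul n259 n14 = n280 := st_comm L comm s14946
  have s14950 : L.mul n260 n280 = n14 := st_ip L inv lip s14947 s7122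
  have s14953 : L.mul n280 n260 = n14 := st_comm L comm s14950
  have s14958 : L.mul n279 n14 = n260 := st_ip L inv lip s14953 s7575
  have s14961 : L.mul n14 n279 = n260 := st_comm L comm s14958
  have s14966 : L.mul n13 n260 = n279 := st_ip L inv lip s14961 s212
  have s16465 : L.mul n14 n315 = n192 := st_hex_u L hx s211 s429 s838 s5591 s1556 s8370
  have s16466 : L.mul n315 n14 = n192 := st_comm L comm s16465
  have s16469 : L.mul n316 n192 = n14 := st_ip L inv lip s16466 s8382
  have s16472 : L.mul n192 n316 = n14 := st_comm L comm s16469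
  have s16477 : L.mul n191 n14 = n316 := st_ip L inv lip s16472 s5595
  have s16480 : L.mul n14 n191 = n316 := st_comm L comm s16477
  have s16485 : L.mul n13 n316 = n191 := st_ip L inv lip s16480 s212
  have s16515 : L.mul n14 n317 = n193 := st_hex_q L hx s211 s8415 s5627 s1592 s429 s838
  have s16516 : L.mul n317 n14 = n193 := st_comm L comm s16515
  have s16519 : L.mul n318 n193 = n14 := st_ip L inv lip s16516 s8427
  have s16522 : L.mul n193 n318 = n14 := st_comm L comm s16519
  have s16527 : L.mul n194 n14 = n318 := st_ip L inv lip s16522 s5637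
  have s16530 : L.mul n14 n194 = n318 := st_comm L comm s16527
  have s16535 : L.mul n13 n318 = n194 := st_ip L inv lip s16530 s212
  have s16540 : L.mul n14 n321 = n195 := st_hex_q L hx s211 s8505 s5672 s1637 s457 s871
  have s16541 : L.mul n321 n14 = n195 := st_comm L comm s16540
  have s16544 : L.mul n322 n195 = n14 := st_ip L inv lip s16541 s8517
  have s16547 : L.mul n195 n322 = n14 := st_comm L comm s16544
  have s16552 : L.mul n196 n14 = n322 := st_ip L inv lip s16547 s5682
  have s16555 : L.mul n14 n196 = n322 := st_comm L comm s16552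
  have s16560 : L.mul n13 n322 = n196 := st_ip L inv lip s16555 s212
  have s16615 : L.mul n24 n277 = n139 := st_hex_q L hx s429 s7515 s4412 s872 s211 s1558
  have s16616 : L.mul n277 n24 = n139 := st_comm L comm s16615
  have s16619 : L.mul n278 n139 = n24 := st_ip L inv lip s16616 s7527
  have s16622 : L.mul n139 n278 = n24 := st_comm L comm s16619
  have s16627 : L.mul n140 n24 = n278 := st_ip L inv lip s16622 s4422
  have s16630 : L.mul n24 n140 = n278 := st_comm L comm s16627
  have s16635 : L.mul n23 n278 = n140 := st_ip L inv lip s16630 s423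
  obtain ⟨n474, s19714⟩ : ∃ n, L.mul n2 n12 = n := ⟨_, rfl⟩
  have s19717 : L.mul x n474 = n12 := st_ip L inv lip s19714 s6
  obtain ⟨n559, s21638⟩ : ∃ n, L.mul x n185 = n := ⟨_, rfl⟩
  obtain ⟨n560, s21649⟩ : ∃ n, L.mul n2 n186 = n := ⟨_, rfl⟩
  have s21650 : inv n559 = n560 := st_aip L inv lip rip comm s21638 s5 s5457 s21649
  have s21652 : L.mul x n560 = n186 := st_ip L inv lip s21649 s6
  have s21653 : inv n560 = n559 := st_iinv L inv lip s21650
  obtain ⟨n579, s22088⟩ : ∃ n, L.mul x n197 = n := ⟨_, rfl⟩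
  obtain ⟨n580, s22099⟩ : ∃ n, L.mul n2 n198 = n := ⟨_, rfl⟩
  have s22100 : inv n579 = n580 := st_aip L inv lip rip comm s22088 s5 s5727 s22099
  have s22102 : L.mul x n580 = n198 := st_ip L inv lip s22099 s6
  have s22103 : inv n580 = n579 := st_iinv L inv lip s22100
  obtain ⟨n663, s23978⟩ : ∃ n, L.mul x n249 = n := ⟨_, rfl⟩
  obtain ⟨n664, s23989⟩ : ∃ n, L.mul n2 n250 = n := ⟨_, rfl⟩
  have s23990 : inv n663 = n664 := st_aip L inv lip rip comm s23978 s5 s6897 s23989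
  have s23993 : inv n664 = n663 := st_iinv L inv lip s23990
  obtain ⟨n673, s24203⟩ : ∃ n, L.mul x n254 = n := ⟨_, rfl⟩
  obtain ⟨n674, s24214⟩ : ∃ n, L.mul n2 n253 = n := ⟨_, rfl⟩
  have s24215 : inv n673 = n674 := st_aip L inv lip rip comm s24203 s5 s6990 s24214
  have s24218 : inv n674 = n673 := st_iinv L inv lip s24215
  obtain ⟨n717, s25193⟩ : ∃ n, L.mul x n278 = n := ⟨_, rfl⟩
  obtain ⟨n718, s25204⟩ : ∃ n, L.mul n2 n277 = n := ⟨_, rfl⟩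
  have s25205 : inv n717 = n718 := st_aip L inv lip rip comm s25193 s5 s7530 s25204
  have s25207 : L.mul x n718 = n277 := st_ip L inv lip s25204 s6
  have s25208 : inv n718 = n717 := st_iinv L inv lip s25205
  obtain ⟨n767, s26318⟩ : ∃ n, L.mul x n315 = n := ⟨_, rfl⟩
  obtain ⟨n768, s26329⟩ : ∃ n, L.mul n2 n316 = n := ⟨_, rfl⟩
  have s26330 : inv n767 = n768 := st_aip L inv lip rip comm s26318 s5 s8382 s26329
  have s26333 : inv n768 = n767 := st_iinv L inv lip s26330
  obtain ⟨n771, s26408⟩ : ∃ n, L.mul x n317 = n := ⟨_, rfl⟩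
  obtain ⟨n772, s26419⟩ : ∃ n, L.mul n2 n318 = n := ⟨_, rfl⟩
  have s26420 : inv n771 = n772 := st_aip L inv lip rip comm s26408 s5 s8427 s26419
  have s26422 : L.mul x n772 = n318 := st_ip L inv lip s26419 s6
  have s26423 : inv n772 = n771 := st_iinv L inv lip s26420
  obtain ⟨n781, s26633⟩ : ∃ n, L.mul x n322 = n := ⟨_, rfl⟩
  obtain ⟨n782, s26644⟩ : ∃ n, L.mul n2 n321 = n := ⟨_, rfl⟩
  have s26645 : inv n781 = n782 := st_aip L inv lip rip comm s26633 s5 s8520 s26644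
  have s26647 : L.mul x n782 = n321 := st_ip L inv lip s26644 s6
  have s26648 : inv n782 = n781 := st_iinv L inv lip s26645
  obtain ⟨n813, s27353⟩ : ∃ n, L.mul x n350 = n := ⟨_, rfl⟩
  obtain ⟨n814, s27364⟩ : ∃ n, L.mul n2 n349 = n := ⟨_, rfl⟩
  have s27365 : inv n813 = n814 := st_aip L inv lip rip comm s27353 s5 s9136 s27364
  have s27367 : L.mul x n814 = n349 := st_ip L inv lip s27364 s6
  obtain ⟨n861, s28433⟩ : ∃ n, L.mul x n388 = n := ⟨_, rfl⟩
  obtain ⟨n862, s28444⟩ : ∃ n, L.mul n2 n387 = n := ⟨_, rfl⟩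
  have s28445 : inv n861 = n862 := st_aip L inv lip rip comm s28433 s5 s9977 s28444
  obtain ⟨n919, s29738⟩ : ∃ n, L.mul y n108 = n := ⟨_, rfl⟩
  have s29739 : L.mul n108 y = n919 := st_comm L comm s29738
  have s29740 : L.mul n4 n919 = n108 := st_ip L inv lip s29738 s24
  have s29743 : L.mul n919 n4 = n108 := st_comm L comm s29740
  obtain ⟨n920, s29749⟩ : ∃ n, L.mul n4 n107 = n := ⟨_, rfl⟩
  have s29750 : inv n919 = n920 := st_aip L inv lip rip comm s29738 s24 s3705 s29749
  have s29753 : inv n920 = n919 := st_iinv L inv lip s29750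
  have s29756 : L.mul n920 n108 = n4 := st_ip L inv lip s29743 s29750
  obtain ⟨n1307, s38468⟩ : ∃ n, L.mul y n420 = n := ⟨_, rfl⟩
  have s38469 : L.mul n420 y = n1307 := st_comm L comm s38468
  obtain ⟨n1308, s38479⟩ : ∃ n, L.mul n4 n419 = n := ⟨_, rfl⟩
  have s38480 : inv n1307 = n1308 := st_aip L inv lip rip comm s38468 s24 s10669 s38479
  have s38483 : inv n1308 = n1307 := st_iinv L inv lip s38480
  obtain ⟨n1353, s39503⟩ : ∃ n, L.mul z n107 = n := ⟨_, rfl⟩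
  have s39505 : L.mul n6 n1353 = n107 := st_ip L inv lip s39503 s43
  have s39508 : L.mul n1353 n6 = n107 := st_comm L comm s39505
  obtain ⟨n1354, s39514⟩ : ∃ n, L.mul n6 n108 = n := ⟨_, rfl⟩
  have s39515 : inv n1353 = n1354 := st_aip L inv lip rip comm s39503 s43 s3702 s39514
  have s39521 : L.mul n1354 n107 = n6 := st_ip L inv lip s39508 s39515
  obtain ⟨n1739, s48188⟩ : ∃ n, L.mul z n419 = n := ⟨_, rfl⟩
  have s48189 : L.mul n419 z = n1739 := st_comm L comm s48188
  have s48192 : L.mul n420 n1739 = z := st_ip L inv lip s48189 s10666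
  have s48195 : L.mul n1739 n420 = z := st_comm L comm s48192
  obtain ⟨n1783, s49178⟩ : ∃ n, L.mul n7 n35 = n := ⟨_, rfl⟩
  have s49180 : L.mul n8 n1783 = n35 := st_ip L inv lip s49178 s74
  have s49183 : L.mul n1783 n8 = n35 := st_comm L comm s49180
  obtain ⟨n1784, s49189⟩ : ∃ n, L.mul n8 n36 = n := ⟨_, rfl⟩
  have s49190 : inv n1783 = n1784 := st_aip L inv lip rip comm s49178 s74 s837 s49189
  have s49196 : L.mul n1784 n35 = n8 := st_ip L inv lip s49183 s49190
  obtain ⟨n1785, s49223⟩ : ∃ n, L.mul n7 n36 = n := ⟨_, rfl⟩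
  have s49224 : L.mul n36 n7 = n1785 := st_comm L comm s49223
  have s49225 : L.mul n8 n1785 = n36 := st_ip L inv lip s49223 s74
  have s49228 : L.mul n1785 n8 = n36 := st_comm L comm s49225
  obtain ⟨n1786, s49234⟩ : ∃ n, L.mul n8 n35 = n := ⟨_, rfl⟩
  have s49235 : inv n1785 = n1786 := st_aip L inv lip rip comm s49223 s74 s840 s49234
  have s49236 : L.mul n35 n8 = n1786 := st_comm L comm s49234
  obtain ⟨n2073, s55703⟩ : ∃ n, L.mul n21 n36 = n := ⟨_, rfl⟩
  have s55704 : L.mul n36 n21 = n2073 := st_comm L comm s55703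
  obtain ⟨n2074, s55714⟩ : ∃ n, L.mul n22 n35 = n := ⟨_, rfl⟩
  have s55715 : inv n2073 = n2074 := st_aip L inv lip rip comm s55703 s375 s840 s55714
  have s55718 : inv n2074 = n2073 := st_iinv L inv lip s55715
  obtain ⟨n2077, s55793⟩ : ∃ n, L.mul n21 n38 = n := ⟨_, rfl⟩
  have s55794 : L.mul n38 n21 = n2077 := st_comm L comm s55793
  obtain ⟨n2078, s55804⟩ : ∃ n, L.mul n22 n37 = n := ⟨_, rfl⟩
  have s55805 : inv n2077 = n2078 := st_aip L inv lip rip comm s55793 s375 s885 s55804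
  have s55806 : L.mul n37 n22 = n2078 := st_comm L comm s55804
  obtain ⟨n2157, s57593⟩ : ∃ n, L.mul n23 n36 = n := ⟨_, rfl⟩
  have s57594 : L.mul n36 n23 = n2157 := st_comm L comm s57593
  obtain ⟨n2158, s57604⟩ : ∃ n, L.mul n24 n35 = n := ⟨_, rfl⟩
  have s57605 : inv n2157 = n2158 := st_aip L inv lip rip comm s57593 s420 s840 s57604
  have s57606 : L.mul n35 n24 = n2158 := st_comm L comm s57604
  obtain ⟨n2185, s58223⟩ : ∃ n, L.mul n23 n54 = n := ⟨_, rfl⟩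
  obtain ⟨n2186, s58234⟩ : ∃ n, L.mul n24 n53 = n := ⟨_, rfl⟩
  have s58235 : inv n2185 = n2186 := st_aip L inv lip rip comm s58223 s420 s1245 s58234
  have s66651 : L.mul x n1785 = n250 := st_hex_p L hx s62 s839 s218 s1918 s49223 s6899
  have s66653 : L.mul n2 n250 = n1785 := st_ip L inv lip s66651 s5
  have s66656 : n1785 = n664 := s66653.symm.trans s23989
  have s66662 : L.mul n664 n8 = n36 := by rw [s66656] at s49228; exact s49228
  have s66664 : L.mul n663 n36 = n8 := st_ip L inv lip s66662 s23993
  have s66673 : inv n664 = n1786 := by rw [s66656] at s49235; exact s49235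
  have s66674 : n1786 = n663 := s66673.symm.trans s23993
  have s67077 : L.mul n7 n474 = n36 := st_hex_y L hx s62 s19717 s173 s121 s839 s218
  have s67079 : L.mul n8 n36 = n474 := st_ip L inv lip s67077 s74
  have s67082 : n474 = n1784 := s67079.symm.trans s49189
  have s67085 : n1784 = n474 := s67082.symm
  have s67088 : L.mul n474 n35 = n8 := by rw [s67085] at s49196; exact s49196
  have s67089 : L.mul n35 n474 = n8 := st_comm L comm s67088
  have s67494 : L.mul y n813 = n107 := st_hex_q L hx s62 s27353 s14547 s9135 s870 s5670
  have s67495 : L.mul n813 y = n107 := st_comm L comm s67494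
  have s67496 : L.mul n4 n107 = n813 := st_ip L inv lip s67494 s24
  have s67498 : L.mul n814 n107 = y := st_ip L inv lip s67495 s27365
  have s67499 : n813 = n920 := s67496.symm.trans s29749
  have s67500 : L.mul n107 n814 = y := st_comm L comm s67498
  have s67502 : n920 = n813 := s67499.symm
  have s67505 : L.mul n813 n108 = n4 := by rw [s67502] at s29756; exact s29756
  have s67506 : L.mul n108 n813 = n4 := st_comm L comm s67505
  have s67513 : inv n813 = n919 := by rw [s67502] at s29753; exact s29753
  have s67514 : n919 = n814 := s67513.symm.trans s27365
  have s71010 : L.mul x n2077 = n253 := st_hex_p L hx s363 s884 s201 s2086 s55793 s6977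
  have s71012 : L.mul n2 n253 = n2077 := st_ip L inv lip s71010 s5
  have s71015 : n2077 = n674 := s71012.symm.trans s24214
  have s71032 : inv n674 = n2078 := by rw [s71015] at s55805; exact s55805
  have s71033 : n2078 = n673 := s71032.symm.trans s24218
  have s71685 : L.mul y n420 = n2074 := st_hex_r L hx s377 s408 s10665 s198 s825 s55714
  have s71686 : n2074 = n1307 := s71685.symm.trans s38468
  have s71697 : inv n1307 = n2073 := by rw [s71686] at s55718; exact s55718
  have s71698 : n2073 = n1308 := s71697.symm.trans s38480
  have s73174 : L.mul x n2157 = n318 := st_hex_p L hx s408 s839 s211 s1603 s57593 s8429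
  have s73176 : L.mul n2 n318 = n2157 := st_ip L inv lip s73174 s5
  have s73179 : n2157 = n772 := s73176.symm.trans s26419
  have s73196 : inv n772 = n2158 := by rw [s73179] at s57605; exact s57605
  have s73197 : n2158 = n771 := s73196.symm.trans s26423
  have s73225 : L.mul x n2185 = n316 := st_hex_p L hx s408 s1244 s533 s1546 s58223 s8384
  have s73227 : L.mul n2 n316 = n2185 := st_ip L inv lip s73225 s5
  have s73230 : n2185 = n768 := s73227.symm.trans s26329
  have s73247 : inv n768 = n2186 := by rw [s73230] at s58235; exact s58235
  have s73248 : n2186 = n767 := s73247.symm.trans s26333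
  have s73790 : L.mul z n717 = n108 := st_hex_q L hx s408 s25193 s13370 s16635 s4424 s8325
  have s73791 : L.mul n717 z = n108 := st_comm L comm s73790
  have s73792 : L.mul n6 n108 = n717 := st_ip L inv lip s73790 s43
  have s73795 : n717 = n1354 := s73792.symm.trans s39514
  have s73798 : n1354 = n717 := s73795.symm
  have s73801 : L.mul n717 n107 = n6 := by rw [s73798] at s39521; exact s39521
  have s73802 : L.mul n107 n717 = n6 := st_comm L comm s73801
  have s74477 : L.mul n24 n53 = n767 := by rw [s73248] at s58234; exact s58234
  have s74478 : L.mul n6 n767 = n419 := st_hex_r L hx s422 s1230 s74477 s550 s363 s10655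
  have s74480 : L.mul z n419 = n767 := st_ip L inv lip s74478 s44
  have s74483 : n767 = n1739 := s74480.symm.trans s48188
  have s74486 : n1739 = n767 := s74483.symm
  have s74490 : L.mul n767 n420 = z := by rw [s74486] at s48195; exact s48195
  have s74492 : L.mul n768 z = n420 := st_ip L inv lip s74490 s26330
  have s78074 : L.mul n35 n8 = n663 := by rw [s66674] at s49236; exact s49236
  have s78075 : L.mul x n663 = n186 := st_hex_p L hx s825 s76 s204 s7426 s78074 s14941
  have s78077 : L.mul n2 n186 = n663 := st_ip L inv lip s78075 s5
  have s78080 : n663 = n560 := s78077.symm.trans s21649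
  have s78096 : L.mul n560 n36 = n8 := by rw [s78080] at s66664; exact s66664
  have s78098 : L.mul n559 n8 = n36 := st_ip L inv lip s78096 s21653
  have s78109 : inv n560 = n664 := by rw [s78080] at s23990; exact s23990
  have s78110 : n664 = n559 := s78109.symm.trans s21653
  have s78166 : L.mul n35 n18 = n772 := st_hex_y L hx s825 s301 s263 s5638 s26422 s16535
  have s78167 : L.mul n18 n35 = n772 := st_comm L comm s78166
  have s78170 : L.mul n17 n772 = n35 := st_ip L inv lip s78167 s302
  have s78173 : L.mul n772 n17 = n35 := st_comm L comm s78170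
  have s78178 : L.mul n771 n35 = n17 := st_ip L inv lip s78173 s26423
  have s78181 : L.mul n35 n771 = n17 := st_comm L comm s78178
  have s78186 : L.mul n36 n17 = n771 := st_ip L inv lip s78181 s837
  have s78191 : L.mul n35 n24 = n771 := by rw [s73197] at s57606; exact s57606
  have s78192 : L.mul x n771 = n316 := st_hex_p L hx s825 s422 s202 s5581 s78191 s16485
  have s78194 : L.mul n2 n316 = n771 := st_ip L inv lip s78192 s5
  have s78197 : n771 = n768 := s78194.symm.trans s26329
  have s78228 : L.mul n768 n35 = n17 := by rw [s78197] at s78178; exact s78178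
  have s78232 : inv n768 = n772 := by rw [s78197] at s26420; exact s26420
  have s78233 : n772 = n767 := s78232.symm.trans s26333
  have s78392 : L.mul n13 n12 = n275 := st_hex_q L hx s825 s19717 s7474 s67089 s76 s204
  have s78394 : L.mul n14 n275 = n12 := st_ip L inv lip s78392 s209
  have s78544 : L.mul n36 n7 = n664 := by rw [s66656] at s49224; exact s49224
  have s78545 : L.mul n36 n7 = n559 := by rw [s78110] at s78544; exact s78544
  have s78572 : L.mul n36 n17 = n768 := by rw [s78197] at s78186; exact s78186
  have s78573 : L.mul n14 n768 = n559 := st_hex_r L hx s839 s287 s78572 s246 s62 s78545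
  have s78575 : L.mul n13 n559 = n768 := st_ip L inv lip s78573 s212
  have s78578 : L.mul n559 n13 = n768 := st_comm L comm s78575
  have s78623 : L.mul n36 n23 = n772 := by rw [s73179] at s57594; exact s57594
  have s78624 : L.mul n36 n23 = n767 := by rw [s78233] at s78623; exact s78623
  have s78625 : L.mul n36 n21 = n1308 := by rw [s71698] at s55704; exact s55704
  have s78626 : L.mul n14 n767 = n1308 := st_hex_r L hx s839 s408 s78624 s216 s363 s78625
  have s78628 : L.mul n13 n1308 = n767 := st_ip L inv lip s78626 s212
  have s78631 : L.mul n1308 n13 = n767 := st_comm L comm s78628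
  have s78636 : L.mul n1307 n767 = n13 := st_ip L inv lip s78631 s38483
  have s78639 : L.mul n767 n1307 = n13 := st_comm L comm s78636
  have s78644 : L.mul n768 n13 = n1307 := st_ip L inv lip s78639 s26330
  have s78651 : L.mul n36 n861 = n12 := st_hex_u L hx s839 s467 s7471 s78394 s9973 s28433
  have s78653 : L.mul n35 n12 = n861 := st_ip L inv lip s78651 s840
  have s78656 : L.mul n12 n35 = n861 := st_comm L comm s78653
  have s78661 : L.mul n11 n861 = n35 := st_ip L inv lip s78656 s167
  have s78664 : L.mul n861 n11 = n35 := st_comm L comm s78661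
  have s78669 : L.mul n862 n35 = n11 := st_ip L inv lip s78664 s28445
  have s78971 : L.mul n37 n22 = n673 := by rw [s71033] at s55806; exact s55806
  have s78972 : L.mul x n673 = n259 := st_hex_p L hx s870 s377 s215 s7573 s78971 s14946
  have s79161 : L.mul n37 n110 = n782 := st_hex_y L hx s870 s3749 s246 s5671 s26647 s16540
  have s79162 : L.mul n110 n37 = n782 := st_comm L comm s79161
  have s79165 : L.mul n109 n782 = n37 := st_ip L inv lip s79162 s3750
  have s79168 : L.mul n782 n109 = n37 := st_comm L comm s79165
  have s79173 : L.mul n781 n37 = n109 := st_ip L inv lip s79168 s26648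
  have s79176 : L.mul n37 n781 = n109 := st_comm L comm s79173
  have s79181 : L.mul n38 n109 = n781 := st_ip L inv lip s79176 s882
  have s79336 : L.mul n38 n21 = n674 := by rw [s71015] at s55794; exact s55794
  have s79415 : L.mul n13 n781 = n674 := st_hex_r L hx s884 s3735 s79181 s263 s363 s79336
  have s79416 : L.mul n781 n13 = n674 := st_comm L comm s79415
  have s79419 : L.mul n782 n674 = n13 := st_ip L inv lip s79416 s26645
  have s79422 : L.mul n674 n782 = n13 := st_comm L comm s79419
  have s79427 : L.mul n673 n13 = n782 := st_ip L inv lip s79422 s24218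
  have s79430 : L.mul n13 n673 = n782 := st_comm L comm s79427
  have s79440 : L.mul n13 n580 = n718 := st_hex_y L hx s884 s22102 s5736 s204 s25207 s7519
  have s79441 : L.mul n580 n13 = n718 := st_comm L comm s79440
  have s79442 : L.mul n14 n718 = n580 := st_ip L inv lip s79440 s209
  have s79444 : L.mul n579 n718 = n13 := st_ip L inv lip s79441 s22103
  have s79445 : L.mul n718 n14 = n580 := st_comm L comm s79442
  have s79447 : L.mul n718 n579 = n13 := st_comm L comm s79444
  have s79450 : L.mul n717 n580 = n14 := st_ip L inv lip s79445 s25208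
  have s79452 : L.mul n717 n13 = n579 := st_ip L inv lip s79447 s25208
  have s79453 : L.mul n580 n717 = n14 := st_comm L comm s79450
  have s79458 : L.mul n579 n14 = n717 := st_ip L inv lip s79453 s22103
  have s79590 : L.mul n38 n813 = n322 := st_hex_q L hx s884 s27353 s16560 s9142 s76 s5683
  have s79591 : L.mul n813 n38 = n322 := st_comm L comm s79590
  have s79594 : L.mul n814 n322 = n38 := st_ip L inv lip s79591 s27365
  have s79597 : L.mul n322 n814 = n38 := st_comm L comm s79594
  have s79602 : L.mul n321 n38 = n814 := st_ip L inv lip s79597 s8520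
  have s79605 : L.mul n38 n321 = n814 := st_comm L comm s79602
  have s79665 : L.mul n38 n861 = n260 := st_hex_q L hx s884 s28433 s14966 s9976 s467 s7561
  have s79666 : L.mul n861 n38 = n260 := st_comm L comm s79665
  have s79669 : L.mul n862 n260 = n38 := st_ip L inv lip s79666 s28445
  have s79672 : L.mul n260 n862 = n38 := st_comm L comm s79669
  have s79677 : L.mul n259 n38 = n862 := st_ip L inv lip s79672 s7125
  have s79680 : L.mul n38 n259 = n862 := st_comm L comm s79677
  have s79690 : L.mul n13 n862 = n814 := st_hex_r L hx s884 s78972 s79680 s79430 s26647 s79605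
  have s79692 : L.mul n14 n814 = n862 := st_ip L inv lip s79690 s209
  have s79695 : L.mul n814 n14 = n862 := st_comm L comm s79692
  have s82336 : L.mul n10 n349 = n717 := st_hex_q L hx s3690 s27367 s73802 s67500 s62 s126
  have s82337 : L.mul n349 n10 = n717 := st_comm L comm s82336
  have s82340 : L.mul n350 n717 = n10 := st_ip L inv lip s82337 s9133
  have s82343 : L.mul n717 n350 = n10 := st_comm L comm s82340
  have s82348 : L.mul n718 n10 = n350 := st_ip L inv lip s82343 s25205
  have s82351 : L.mul n10 n718 = n350 := st_comm L comm s82348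
  have s82356 : L.mul n9 n350 = n718 := st_ip L inv lip s82351 s122
  have s82387 : L.mul n108 n277 = n186 := st_hex_u L hx s3704 s27353 s67506 s5458 s82356 s25207
  have s82388 : L.mul n277 n108 = n186 := st_comm L comm s82387
  have s82391 : L.mul n278 n186 = n108 := st_ip L inv lip s82388 s7527
  have s82394 : L.mul n186 n278 = n108 := st_comm L comm s82391
  have s84127 : L.mul n559 n10 = n274 := st_hex_r L hx s21638 s76 s5450 s78098 s839 s14922
  have s84128 : L.mul n10 n559 = n274 := st_comm L comm s84127
  have s84131 : L.mul n9 n274 = n559 := st_ip L inv lip s84128 s122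
  have s84134 : L.mul n274 n9 = n559 := st_comm L comm s84131
  have s84139 : L.mul n273 n559 = n9 := st_ip L inv lip s84134 s7440
  have s84142 : L.mul n559 n273 = n9 := st_comm L comm s84139
  have s84147 : L.mul n560 n9 = n273 := st_ip L inv lip s84142 s21650
  have s84277 : L.mul n560 n717 = n13 := st_hex_q L hx s21652 s25193 s14939 s82394 s3704 s84147
  have s84279 : L.mul n559 n13 = n717 := st_ip L inv lip s84277 s21653
  have s84282 : n717 = n768 := s84279.symm.trans s78578
  have s84285 : n768 = n717 := s84282.symm
  have s84305 : L.mul n717 z = n420 := by rw [s84285] at s74492; exact s74492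
  have s84306 : n420 = n108 := s84305.symm.trans s73791
  have s84325 : L.mul n717 n35 = n17 := by rw [s84285] at s78228; exact s78228
  have s84335 : L.mul n717 n13 = n1307 := by rw [s84285] at s78644; exact s78644
  have s84336 : n1307 = n579 := s84335.symm.trans s79452
  have s84560 : L.mul n108 y = n1307 := by rw [s84306] at s38469; exact s38469
  have s84561 : L.mul n108 y = n579 := by rw [s84336] at s84560; exact s84560
  have s84562 : n579 = n919 := s84561.symm.trans s29739
  have s85078 : n579 = n814 := by rw [s67514] at s84562; exact s84562
  have s85079 : n814 = n579 := s85078.symm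
  have s86094 : L.mul n579 n14 = n862 := by rw [s85079] at s79695; exact s79695
  have s86095 : n862 = n717 := s86094.symm.trans s79458
  have s89765 : L.mul n717 n35 = n11 := by rw [s86095] at s78669; exact s78669
  have s89766 : n11 = n17 := s89765.symm.trans s84325
  have s92385 : n17 = n11 := s89766.symm
  rw [s62, s107, s152, s197, s242, s287]
  simp only [s92385]
end

section
/- In every left semi-universally flexible loop, for all x, y and all integers m, n: if xᵐ·xⁿ = x^(m+n) then x^(m+1)·xⁿ = x^(m+n+1), where integer powers are defined left-associatedly by x⁰ = 1, x^(n+1) = x·xⁿ, and x^(n−1) = x\xⁿ; in particular x·(xᵐ·xⁿ) = x^(m+1)·xⁿ for all m, n. -/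
/-- In a left SUF loop, if `xᵐ·xⁿ = x^(m+n)` then `x^(m+1)·xⁿ = x^(m+n+1)`;
in particular `x·(xᵐ·xⁿ) = x^(m+1)·xⁿ`. -/
theorem lsuf_pow_step {Q : Type*} (L : LoopStr Q)
    (lsuf : ∀ x y u,
      L.mul (L.rd x u) (L.mul (L.rd y u) x)
        = L.mul (L.rd (L.mul (L.rd x u) y) u) x)
    (pow : Q → ℤ → Q)
    (pow_zero : ∀ x, pow x 0 = L.one)
    (pow_succ : ∀ x (n : ℤ), pow x (n + 1) = L.mul x (pow x n))
    (pow_pred : ∀ x (n : ℤ), pow x (n - 1) = L.ld x (pow x n)) :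
    ∀ x : Q, ∀ m n : ℤ,
      (L.mul (pow x m) (pow x n) = pow x (m + n) →
        L.mul (pow x (m + 1)) (pow x n) = pow x (m + n + 1))
      ∧ L.mul x (L.mul (pow x m) (pow x n))
          = L.mul (pow x (m + 1)) (pow x n) := by
  intro x m n
  have key : ∀ k : ℤ,
      (L.mul x (L.mul (pow x m) (pow x k)) = L.mul (pow x (m + 1)) (pow x k)) ↔
      (L.mul x (L.mul (pow x m) (pow x (k + 1)))
        = L.mul (pow x (m + 1)) (pow x (k + 1))) := by
    intro k
    have h := lsuf (L.mul x (pow x k)) (L.mul (pow x m) (pow x k)) (pow x k)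
    rw [L.rd_mul, L.rd_mul, ← pow_succ] at h
    rw [h]
    constructor
    · intro e
      rw [e, L.rd_mul]
    · intro e
      have e2 := congrArg (fun z => L.rd z (pow x (k + 1))) e
      simp only [L.rd_mul] at e2
      rw [← e2, L.mul_rd]
  have P : L.mul x (L.mul (pow x m) (pow x n)) = L.mul (pow x (m + 1)) (pow x n) := by
    induction n using Int.induction_on with
    | zero => rw [pow_zero, L.mul_one, L.mul_one, pow_succ]
    | succ i ih => exact (key _).1 ih
    | pred i ih =>
      apply (key _).2
      rw [sub_add_cancel]
      exact ih
  refine ⟨fun h => ?_, P⟩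
  rw [← P, h, pow_succ]
end
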